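/- Let q ∈ (0,1) be real and set v = −q · χ³(q)/χ⁹(q³) (so that v = u³ where u = −q^{1/3} χ(q)/χ³(q³)). Then ( χ(q³) / χ³(q) )³ = (1 + v) / (1 − 8v). -/

import Mathlib

/-- Ramanujan's theta function `χ(q) = ∏_{m=0}^∞ (1 + q^{2m+1})`. -/
noncomputable def chi (q : ℝ) : ℝ := ∏' m : ℕ, (1 + q ^ (2 * m + 1))

/-!
Write `a = χ(q)`, `b = (q; q²)_∞`, `e = (-q²; q²)_∞`, and `c`, `d`, `f` for the same products at
`q³`. Euler's identity gives `a b e = 1` and `c d f = 1`. The Jacobi triple product expresses the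
theta constants through these products, which turns Jacobi's `θ₃⁴ = θ₄⁴ + θ₂⁴` and Legendre's cubic
`θ₃(q) θ₃(q³) = θ₄(q) θ₄(q³) + θ₂(q) θ₂(q³)` into
`a⁸ = b⁸ + 16 q e⁸`, `c⁸ = d⁸ + 16 q³ f⁸`, `a² c² = b² d² + 4 q e² f²`.
The first two determine `(b⁸ - 16 q e⁸)²` and `(d⁸ - 16 q³ f⁸)²` in terms of `a`, `c` and `q`, and
the third determines the product of `b⁸ - 16 q e⁸` and `d⁸ - 16 q³ f⁸`. Comparing the two gives
`(q a¹² + c¹²)² = ((a c)³ ((a c)⁶ - 8 q))²`, and for real `q` both bases are nonnegative. The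
theorem is a rearrangement of the resulting equation.
-/

open Filter Finset Topology

/-! ### q-Pochhammer symbols -/

section QPochhammer

variable {R : Type*} [CommRing R]

/-- The finite `q`-Pochhammer symbol `(a; q)_n`. -/
def qPochhammer (a q : R) (n : ℕ) : R := ∏ k ∈ range n, (1 - a * q ^ k)

/-- The infinite `q`-Pochhammer symbol `(a; q)_∞`. -/
noncomputable def qPochhammerInf [TopologicalSpace R] (a q : R) : R := ∏' k : ℕ, (1 - a * q ^ k)

theorem qPochhammer_succ (a q : R) (n : ℕ) :
    qPochhammer a q (n + 1) = qPochhammer a q n * (1 - a * q ^ n) :=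
  prod_range_succ _ n

variable {𝕜 : Type*} [NormedField 𝕜] {a q : 𝕜}

theorem norm_pow_lt_one (hq : ‖q‖ < 1) {n : ℕ} (hn : n ≠ 0) : ‖q ^ n‖ < 1 := by
  rw [norm_pow]
  exact pow_lt_one₀ (norm_nonneg q) hq hn

theorem one_sub_mul_pow_ne_zero (ha : ‖a‖ < 1) (hq : ‖q‖ < 1) (k : ℕ) : 1 - a * q ^ k ≠ 0 := by
  have hlt : ‖a * q ^ k‖ < 1 := by
    rw [norm_mul, norm_pow]
    exact mul_lt_one_of_nonneg_of_lt_one_left (norm_nonneg a) ha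
      (pow_le_one₀ (norm_nonneg q) hq.le)
  intro h
  rw [← sub_eq_zero.1 h, norm_one] at hlt
  exact lt_irrefl _ hlt

theorem summable_norm_neg_mul_pow (a : 𝕜) (hq : ‖q‖ < 1) :
    Summable fun k : ℕ => ‖-(a * q ^ k)‖ := by
  simpa only [norm_neg, norm_mul, norm_pow] using
    (summable_geometric_of_lt_one (norm_nonneg q) hq).mul_left ‖a‖

variable [CompleteSpace 𝕜]

theorem multipliable_one_sub_mul_pow (a : 𝕜) (hq : ‖q‖ < 1) :
    Multipliable fun k : ℕ => 1 - a * q ^ k := by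
  simpa only [sub_eq_add_neg] using
    multipliable_one_add_of_summable (summable_norm_neg_mul_pow a hq)

theorem qPochhammerInf_ne_zero (ha : ‖a‖ < 1) (hq : ‖q‖ < 1) : qPochhammerInf a q ≠ 0 := by
  simpa only [qPochhammerInf, sub_eq_add_neg] using
    tprod_one_add_ne_zero_of_summable
      (fun k => by simpa only [sub_eq_add_neg] using one_sub_mul_pow_ne_zero ha hq k)
      (summable_norm_neg_mul_pow a hq)

theorem tendsto_qPochhammer (a : 𝕜) (hq : ‖q‖ < 1) :
    Tendsto (qPochhammer a q) atTop (𝓝 (qPochhammerInf a q)) :=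
  (multipliable_one_sub_mul_pow a hq).hasProd.tendsto_prod_nat

theorem qPochhammerInf_eq_one_sub_mul (a : 𝕜) (hq : ‖q‖ < 1) :
    qPochhammerInf a q = (1 - a) * qPochhammerInf (a * q) q := by
  have hshift (k : ℕ) : 1 - a * q * q ^ k = 1 - a * q ^ (k + 1) := by ring
  have hmul := multipliable_one_sub_mul_pow (a * q) hq
  simp only [qPochhammerInf, hshift] at hmul ⊢
  simpa only [pow_zero, mul_one] using tprod_eq_zero_mul' (f := fun k => 1 - a * q ^ k) hmul

theorem qPochhammerInf_mul_shift (a : 𝕜) (hq : ‖q‖ < 1) :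
    qPochhammerInf a (q ^ 2) * qPochhammerInf (a * q) (q ^ 2) = qPochhammerInf a q := by
  have hq2 : ‖q ^ 2‖ < 1 := norm_pow_lt_one hq two_ne_zero
  have heven (k : ℕ) : 1 - a * (q ^ 2) ^ k = 1 - a * q ^ (2 * k) := by rw [pow_mul]
  have hodd (k : ℕ) : 1 - a * q * (q ^ 2) ^ k = 1 - a * q ^ (2 * k + 1) := by ring
  have hmul := multipliable_one_sub_mul_pow a hq2
  have hmul' := multipliable_one_sub_mul_pow (a * q) hq2
  simp only [qPochhammerInf, heven, hodd] at hmul hmul' ⊢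
  exact tprod_even_mul_odd (f := fun k => 1 - a * q ^ k) hmul hmul'

theorem qPochhammerInf_mul_neg (a : 𝕜) (hq : ‖q‖ < 1) :
    qPochhammerInf a q * qPochhammerInf (-a) q = qPochhammerInf (a ^ 2) (q ^ 2) := by
  rw [qPochhammerInf, qPochhammerInf, ← (multipliable_one_sub_mul_pow a hq).tprod_mul
    (multipliable_one_sub_mul_pow (-a) hq), qPochhammerInf]
  exact tprod_congr fun k => by ring

theorem euler_qPochhammerInf_mul (hq : ‖q‖ < 1) :
    qPochhammerInf q (q ^ 2) * qPochhammerInf (-q) q = 1 := by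
  have hq2 : ‖q ^ 2‖ < 1 := norm_pow_lt_one hq two_ne_zero
  have hshift := qPochhammerInf_mul_shift q hq
  have hneg := qPochhammerInf_mul_neg q hq
  rw [← hshift, ← pow_two] at hneg
  apply mul_left_cancel₀ (qPochhammerInf_ne_zero hq2 hq2)
  linear_combination hneg

theorem weber_qPochhammerInf_mul (hq : ‖q‖ < 1) :
    qPochhammerInf (-q) (q ^ 2) * qPochhammerInf q (q ^ 2) * qPochhammerInf (-q ^ 2) (q ^ 2) =
      1 := by
  have hq2 : ‖q ^ 2‖ < 1 := norm_pow_lt_one hq two_ne_zero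
  rw [mul_comm (qPochhammerInf (-q) _), qPochhammerInf_mul_neg q hq2,
    euler_qPochhammerInf_mul hq2]

end QPochhammer

/-! ### The Jacobi triple product -/

section TripleProduct

theorem pow_zpow_eq {G : Type*} [DivisionMonoid G] (x : G) (n : ℕ) (k : ℤ) :
    (x ^ n) ^ k = x ^ (n * k) := by
  rw [zpow_mul, zpow_natCast]

variable {K : Type*} [Field K] {q z : K}

/-- The theta series `∑ z ^ j q ^ (j ^ 2)` over all integers `j`. In the nome `q`, the theta
constants are `θ₃ = thetaSeries 1 q`, `θ₄ = thetaSeries (-1) q` and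
`θ₂ = q ^ (1 / 4) * thetaSeries q q`. -/
noncomputable def thetaSeries [TopologicalSpace K] (z q : K) : K := ∑' j : ℤ, z ^ j * q ^ (j ^ 2)

/-- The reciprocal `1 / (q; q)_k`, set to `0` for `k < 0` so that its recursion in `k` holds at
every integer. -/
def invQFactorial (q : K) : ℤ → K
  | (n : ℕ) => (qPochhammer q q n)⁻¹
  | Int.negSucc _ => 0

/-- The Gaussian binomial coefficient `(2n choose n + j)_q` for an integer `j`, zero when `|j| > n`:
the coefficients of the finite form of the triple product. -/
def centralQBinom (q : K) (n : ℕ) (j : ℤ) : K :=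
  qPochhammer q q (2 * n) * (invQFactorial q (n - j) * invQFactorial q (n + j))

theorem invQFactorial_natCast (q : K) (n : ℕ) :
    invQFactorial q n = (qPochhammer q q n)⁻¹ := rfl

theorem invQFactorial_of_neg (q : K) {k : ℤ} (hk : k < 0) : invQFactorial q k = 0 := by
  obtain ⟨n, rfl⟩ := Int.eq_negSucc_of_lt_zero hk
  rfl

theorem invQFactorial_eq_one_sub_mul (hq : ∀ k : ℕ, 1 - q * q ^ k ≠ 0) (k : ℤ) :
    invQFactorial q k = (1 - q ^ (k + 1)) * invQFactorial q (k + 1) := by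
  rcases lt_trichotomy k (-1) with hk | rfl | hk
  · rw [invQFactorial_of_neg q (by lia), invQFactorial_of_neg q (by lia), mul_zero]
  · simp [invQFactorial_of_neg]
  · lift k to ℕ using by lia
    have hfactor := hq k
    rw [← Nat.cast_succ, invQFactorial_natCast, invQFactorial_natCast, zpow_natCast,
      qPochhammer_succ, pow_succ', mul_inv]
    field_simp

theorem centralQBinom_zero_of_ne (q : K) {j : ℤ} (hj : j ≠ 0) : centralQBinom q 0 j = 0 := by
  rcases hj.lt_or_gt with h | h
  · simp [centralQBinom, invQFactorial_of_neg q h]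
  · simp [centralQBinom, invQFactorial_of_neg q (neg_neg_of_pos h)]

theorem centralQBinom_zero_zero (q : K) : centralQBinom q 0 0 = 1 := by
  have h : invQFactorial q 0 = 1 := by simpa [qPochhammer] using invQFactorial_natCast q 0
  simp [centralQBinom, h, qPochhammer]

theorem centralQBinom_succ (hq0 : q ≠ 0) (hq : ∀ k : ℕ, 1 - q * q ^ k ≠ 0) (n : ℕ) (j : ℤ) :
    centralQBinom q (n + 1) j = (1 + q ^ (2 * n + 1)) * centralQBinom q n j
      + q ^ (n + 1 - j : ℤ) * centralQBinom q n (j - 1)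
      + q ^ (n + 1 + j : ℤ) * centralQBinom q n (j + 1) := by
  have hsub := invQFactorial_eq_one_sub_mul hq (n - j)
  have hsub' := invQFactorial_eq_one_sub_mul hq (n - j - 1)
  have hadd := invQFactorial_eq_one_sub_mul hq (n + j)
  have hadd' := invQFactorial_eq_one_sub_mul hq (n + j - 1)
  have hpow : q ^ (2 * n) = q ^ (n - j : ℤ) * q ^ (n + j : ℤ) := by
    rw [← zpow_add₀ hq0, ← zpow_natCast]
    congr 1
    push_cast
    ring
  rw [sub_add_cancel] at hsub' hadd'
  simp only [centralQBinom]
  rw [mul_add_one 2 n, qPochhammer_succ, qPochhammer_succ, Nat.cast_succ,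
    show (n : ℤ) + 1 - j = n - j + 1 by ring, show (n : ℤ) + 1 + j = n + j + 1 by ring,
    show (n : ℤ) - (j - 1) = n - j + 1 by ring, show (n : ℤ) + (j - 1) = n + j - 1 by ring,
    show (n : ℤ) - (j + 1) = n - j - 1 by ring, show (n : ℤ) + (j + 1) = n + j + 1 by ring,
    hsub', hadd', hsub, hadd, zpow_add_one₀ hq0, zpow_add_one₀ hq0, pow_succ q (2 * n), hpow]
  ring

theorem centralQBinom_succ_mul_zpow (hq0 : q ≠ 0) (hq : ∀ k : ℕ, 1 - q ^ 2 * (q ^ 2) ^ k ≠ 0)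
    (hz : z ≠ 0) (n : ℕ) (j : ℤ) :
    centralQBinom (q ^ 2) (n + 1) j * (z ^ j * q ^ (j ^ 2)) =
      (1 + (q ^ 2) ^ (2 * n + 1)) * (centralQBinom (q ^ 2) n j * (z ^ j * q ^ (j ^ 2)))
      + z * q ^ (2 * n + 1) *
        (centralQBinom (q ^ 2) n (j - 1) * (z ^ (j - 1) * q ^ ((j - 1) ^ 2)))
      + z⁻¹ * q ^ (2 * n + 1) *
        (centralQBinom (q ^ 2) n (j + 1) * (z ^ (j + 1) * q ^ ((j + 1) ^ 2))) := by
  have hqsub : (q ^ 2) ^ (n + 1 - j : ℤ) * q ^ (j ^ 2) = q ^ (2 * n + 1) * q ^ ((j - 1) ^ 2) := by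
    rw [pow_zpow_eq, ← zpow_natCast q (2 * n + 1), ← zpow_add₀ hq0, ← zpow_add₀ hq0]
    congr 1
    push_cast
    ring
  have hqadd : (q ^ 2) ^ (n + 1 + j : ℤ) * q ^ (j ^ 2) = q ^ (2 * n + 1) * q ^ ((j + 1) ^ 2) := by
    rw [pow_zpow_eq, ← zpow_natCast q (2 * n + 1), ← zpow_add₀ hq0, ← zpow_add₀ hq0]
    congr 1
    push_cast
    ring
  have hzsub : z * z ^ (j - 1) = z ^ j := by rw [← zpow_one_add₀ hz, add_sub_cancel]
  have hzadd : z⁻¹ * z ^ (j + 1) = z ^ j := by rw [zpow_add_one₀ hz]; field_simp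
  rw [centralQBinom_succ (pow_ne_zero 2 hq0) hq]
  linear_combination (centralQBinom (q ^ 2) n (j - 1) * z ^ j) * hqsub
    + (centralQBinom (q ^ 2) n (j + 1) * z ^ j) * hqadd
    - (centralQBinom (q ^ 2) n (j - 1) * q ^ (2 * n + 1) * q ^ ((j - 1) ^ 2)) * hzsub
    - (centralQBinom (q ^ 2) n (j + 1) * q ^ (2 * n + 1) * q ^ ((j + 1) ^ 2)) * hzadd

variable {𝕜 : Type*} [NormedField 𝕜] {q z : 𝕜}

theorem hasSum_centralQBinom_mul_zpow (hq0 : q ≠ 0) (hq : ‖q‖ < 1) (hz : z ≠ 0) (n : ℕ) :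
    HasSum (fun j : ℤ => centralQBinom (q ^ 2) n j * (z ^ j * q ^ (j ^ 2)))
      (qPochhammer (-(z * q)) (q ^ 2) n * qPochhammer (-(z⁻¹ * q)) (q ^ 2) n) := by
  induction n with
  | zero =>
    have h := hasSum_single (f := fun j : ℤ => centralQBinom (q ^ 2) 0 j * (z ^ j * q ^ (j ^ 2))) 0
      fun j hj => by rw [centralQBinom_zero_of_ne _ hj, zero_mul]
    simpa [centralQBinom_zero_zero, qPochhammer] using h
  | succ n ih =>
    have hq2 := norm_pow_lt_one hq two_ne_zero
    have hfactor := one_sub_mul_pow_ne_zero hq2 hq2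
    set P := qPochhammer (-(z * q)) (q ^ 2) n * qPochhammer (-(z⁻¹ * q)) (q ^ 2) n with hP
    have hprod : qPochhammer (-(z * q)) (q ^ 2) (n + 1) * qPochhammer (-(z⁻¹ * q)) (q ^ 2) (n + 1) =
        (1 + (q ^ 2) ^ (2 * n + 1)) * P + z * q ^ (2 * n + 1) * P + z⁻¹ * q ^ (2 * n + 1) * P := by
      rw [qPochhammer_succ, qPochhammer_succ, hP]
      linear_combination (P * (q ^ (2 * n + 1)) ^ 2) * mul_inv_cancel₀ hz
    have hdiag := ih.mul_left (1 + (q ^ 2) ^ (2 * n + 1))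
    have hsub := ((Equiv.subRight (1 : ℤ)).hasSum_iff.2 ih).mul_left (z * q ^ (2 * n + 1))
    have hadd := ((Equiv.addRight (1 : ℤ)).hasSum_iff.2 ih).mul_left (z⁻¹ * q ^ (2 * n + 1))
    rw [hprod]
    exact ((hdiag.add hsub).add hadd).congr_fun (centralQBinom_succ_mul_zpow hq0 hfactor hz n)

theorem summable_norm_pow_mul_pow_sq (hq0 : q ≠ 0) (hq : ‖q‖ < 1) (hz : z ≠ 0) :
    Summable fun n : ℕ => ‖z ^ n * q ^ (n ^ 2)‖ := by
  have hlim : Tendsto (fun n : ℕ => ‖z * q‖ * (‖q‖ ^ 2) ^ n) atTop (𝓝 0) := by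
    simpa using (tendsto_pow_atTop_nhds_zero_of_lt_one (sq_nonneg ‖q‖)
      (pow_lt_one₀ (norm_nonneg q) hq two_ne_zero)).const_mul ‖z * q‖
  refine summable_of_ratio_test_tendsto_lt_one zero_lt_one
    (Eventually.of_forall fun n => by simp [hz, hq0]) (hlim.congr fun n => ?_)
  simp only [norm_mul, norm_pow, norm_norm]
  field_simp
  ring

theorem summable_norm_zpow_mul_zpow_sq (hq0 : q ≠ 0) (hq : ‖q‖ < 1) (hz : z ≠ 0) :
    Summable fun j : ℤ => ‖z ^ j * q ^ (j ^ 2)‖ := by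
  refine Summable.of_nat_of_neg ?_ ?_
  · exact_mod_cast summable_norm_pow_mul_pow_sq hq0 hq hz
  · refine (summable_norm_pow_mul_pow_sq hq0 hq (inv_ne_zero hz)).congr fun n => ?_
    rw [neg_sq, zpow_neg, inv_pow]
    norm_cast

theorem mul_thetaSeries_mul_sq (hq0 : q ≠ 0) (hz : z ≠ 0) :
    z * q * thetaSeries (z * q ^ 2) q = thetaSeries z q := by
  rw [thetaSeries, thetaSeries, ← tsum_mul_left, ← (Equiv.addRight (1 : ℤ)).tsum_eq
    fun j : ℤ => z ^ j * q ^ (j ^ 2)]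
  refine tsum_congr fun j => ?_
  have hqpow : q ^ ((j + 1) ^ 2) = q * ((q ^ 2) ^ j * q ^ (j ^ 2)) := by
    rw [pow_zpow_eq, ← zpow_add₀ hq0, ← zpow_one_add₀ hq0]
    congr 1
    push_cast
    ring
  rw [Equiv.coe_addRight, hqpow, zpow_add_one₀ hz, mul_zpow]
  ring

variable [CompleteSpace 𝕜]

theorem tendsto_invQFactorial (hq : ‖q‖ < 1) :
    Tendsto (invQFactorial q) atTop (𝓝 (qPochhammerInf q q)⁻¹) := by
  have h := (tendsto_qPochhammer q hq).inv₀ (qPochhammerInf_ne_zero hq hq)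
  rw [← Nat.map_cast_int_atTop]
  exact tendsto_map'_iff.2 h

theorem exists_norm_invQFactorial_le (hq : ‖q‖ < 1) : ∃ M, ∀ k, ‖invQFactorial q k‖ ≤ M := by
  obtain ⟨M, hM⟩ :=
    ((tendsto_qPochhammer q hq).inv₀ (qPochhammerInf_ne_zero hq hq)).norm.bddAbove_range
  have hnat (n : ℕ) : ‖invQFactorial q n‖ ≤ M := hM ⟨n, rfl⟩
  refine ⟨M, fun k => ?_⟩
  rcases lt_or_ge k 0 with hk | hk
  · rw [invQFactorial_of_neg q hk, norm_zero]
    exact (norm_nonneg _).trans (hnat 0)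
  · lift k to ℕ using hk
    exact hnat k

theorem tendsto_centralQBinom (hq : ‖q‖ < 1) (j : ℤ) :
    Tendsto (fun n : ℕ => centralQBinom q n j) atTop (𝓝 (qPochhammerInf q q)⁻¹) := by
  have hnum : Tendsto (fun n : ℕ => qPochhammer q q (2 * n)) atTop (𝓝 (qPochhammerInf q q)) :=
    (tendsto_qPochhammer q hq).comp (tendsto_id.const_mul_atTop' two_pos)
  have hsub : Tendsto (fun n : ℕ => invQFactorial q (n - j)) atTop (𝓝 (qPochhammerInf q q)⁻¹) :=
    (tendsto_invQFactorial hq).comp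
      (tendsto_atTop_add_const_right _ (-j) tendsto_natCast_atTop_atTop)
  have hadd : Tendsto (fun n : ℕ => invQFactorial q (n + j)) atTop (𝓝 (qPochhammerInf q q)⁻¹) :=
    (tendsto_invQFactorial hq).comp
      (tendsto_atTop_add_const_right _ j tendsto_natCast_atTop_atTop)
  simpa only [centralQBinom, mul_inv_cancel_left₀ (qPochhammerInf_ne_zero hq hq)] using
    hnum.mul (hsub.mul hadd)

theorem exists_norm_centralQBinom_le (hq : ‖q‖ < 1) :
    ∃ M, ∀ n j, ‖centralQBinom q n j‖ ≤ M := by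
  obtain ⟨M, hM⟩ := (tendsto_qPochhammer q hq).norm.bddAbove_range
  obtain ⟨N, hN⟩ := exists_norm_invQFactorial_le hq
  have hN0 : 0 ≤ N := (norm_nonneg _).trans (hN 0)
  have hM0 : 0 ≤ M := (norm_nonneg _).trans (hM ⟨0, rfl⟩)
  refine ⟨M * (N * N), fun n j => ?_⟩
  rw [centralQBinom, norm_mul, norm_mul]
  gcongr
  exacts [hM ⟨_, rfl⟩, hN _, hN _]

theorem jacobi_triple_product (hq0 : q ≠ 0) (hq : ‖q‖ < 1) (hz : z ≠ 0) :
    thetaSeries z q = qPochhammerInf (q ^ 2) (q ^ 2) *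
      (qPochhammerInf (-(z * q)) (q ^ 2) * qPochhammerInf (-(z⁻¹ * q)) (q ^ 2)) := by
  have hq2 : ‖q ^ 2‖ < 1 := norm_pow_lt_one hq two_ne_zero
  obtain ⟨M, hM⟩ := exists_norm_centralQBinom_le hq2
  have hsum : Tendsto (fun n : ℕ => ∑' j : ℤ, centralQBinom (q ^ 2) n j * (z ^ j * q ^ (j ^ 2)))
      atTop (𝓝 (∑' j : ℤ, (qPochhammerInf (q ^ 2) (q ^ 2))⁻¹ * (z ^ j * q ^ (j ^ 2)))) := by
    refine tendsto_tsum_of_dominated_convergence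
      ((summable_norm_zpow_mul_zpow_sq hq0 hq hz).mul_left M)
      (fun j => (tendsto_centralQBinom hq2 j).mul_const _) (Eventually.of_forall fun n j => ?_)
    rw [norm_mul]
    exact mul_le_mul_of_nonneg_right (hM n j) (norm_nonneg _)
  have hprod := (tendsto_qPochhammer (-(z * q)) hq2).mul (tendsto_qPochhammer (-(z⁻¹ * q)) hq2)
  have heq := tendsto_nhds_unique hsum
    (hprod.congr fun n => (hasSum_centralQBinom_mul_zpow hq0 hq hz n).tsum_eq.symm)
  rw [tsum_mul_left] at heq
  rw [thetaSeries, ← heq, mul_inv_cancel_left₀ (qPochhammerInf_ne_zero hq2 hq2)]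

end TripleProduct

/-! ### Theta identities -/

section Theta

theorem bijective_sumElim_add_sub : Function.Bijective
    (Sum.elim (fun p : ℤ × ℤ => (p.1 + p.2, p.1 - p.2))
      (fun p : ℤ × ℤ => (p.1 + p.2 + 1, p.1 - p.2))) := by
  constructor
  · rintro (⟨a, b⟩ | ⟨a, b⟩) (⟨c, d⟩ | ⟨c, d⟩) h <;>
      simp only [Sum.elim_inl, Sum.elim_inr, Prod.mk.injEq] at h <;> grind
  · rintro ⟨m, n⟩
    rcases Int.even_or_odd' (m + n) with ⟨k, hk | hk⟩
    · exact ⟨Sum.inl (k, k - n), by ext <;> simp only [Sum.elim_inl] <;> lia⟩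
    · exact ⟨Sum.inr (k, k - n), by ext <;> simp only [Sum.elim_inr] <;> lia⟩

theorem tsum_int_prod_eq_add_sub {E : Type*} [AddCommGroup E] [UniformSpace E]
    [IsUniformAddGroup E] [CompleteSpace E] [T2Space E] {F : ℤ × ℤ → E} (hF : Summable F) :
    ∑' p, F p = ∑' p : ℤ × ℤ, F (p.1 + p.2, p.1 - p.2)
      + ∑' p : ℤ × ℤ, F (p.1 + p.2 + 1, p.1 - p.2) := by
  let e := Equiv.ofBijective _ bijective_sumElim_add_sub
  have he : Summable (F ∘ e) := e.summable_iff.2 hF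
  rw [← e.tsum_eq F]
  exact (HasSum.sum (he.comp_injective Sum.inl_injective).hasSum
    (he.comp_injective Sum.inr_injective).hasSum).tsum_eq

section Exponents

variable {G₀ : Type*} [CommGroupWithZero G₀] {x y : G₀}

theorem zpow_add_mul_zpow_sub (hx : x ≠ 0) (hy : y ≠ 0) (m n : ℤ) :
    x ^ (m + n) * y ^ (m - n) = (x * y) ^ m * (x / y) ^ n := by
  rw [zpow_add₀ hx, zpow_sub₀ hy, mul_zpow, div_zpow, div_eq_mul_inv, div_eq_mul_inv,
    mul_mul_mul_comm]

theorem zpow_add_sq_mul_zpow_sub_sq (hx : x ≠ 0) (m n : ℤ) :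
    x ^ ((m + n) ^ 2) * x ^ ((m - n) ^ 2) = (x ^ 2) ^ (m ^ 2) * (x ^ 2) ^ (n ^ 2) := by
  simp only [pow_zpow_eq, ← zpow_add₀ hx]
  congr 1
  push_cast
  ring

theorem zpow_add_add_one_sq_mul_zpow_sub_sq (hx : x ≠ 0) (m n : ℤ) :
    x ^ ((m + n + 1) ^ 2) * x ^ ((m - n) ^ 2) =
      x * ((x ^ 2) ^ m * (x ^ 2) ^ (m ^ 2) * ((x ^ 2) ^ n * (x ^ 2) ^ (n ^ 2))) := by
  simp only [pow_zpow_eq, ← zpow_add₀ hx, ← zpow_one_add₀ hx]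
  congr 1
  push_cast
  ring

end Exponents

variable {𝕜 : Type*} [NormedField 𝕜] [CompleteSpace 𝕜] {q z w : 𝕜}

theorem tsum_mul_tsum_eq_add_sub {f g : ℤ → 𝕜} (hf : Summable fun j => ‖f j‖)
    (hg : Summable fun j => ‖g j‖) :
    (∑' j, f j) * (∑' j, g j) = ∑' p : ℤ × ℤ, f (p.1 + p.2) * g (p.1 - p.2)
      + ∑' p : ℤ × ℤ, f (p.1 + p.2 + 1) * g (p.1 - p.2) := by
  have hfg : Summable fun p : ℤ × ℤ => f p.1 * g p.2 := summable_mul_of_summable_norm hf hg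
  exact (tsum_mul_tsum_of_summable_norm hf hg).trans (tsum_int_prod_eq_add_sub hfg)

theorem thetaSeries_mul_thetaSeries {r : 𝕜} (hq0 : q ≠ 0) (hq : ‖q‖ < 1) (hr0 : r ≠ 0)
    (hr : ‖r‖ < 1) (hz : z ≠ 0) (hw : w ≠ 0) :
    thetaSeries z q * thetaSeries w r =
      ∑' p : ℤ × ℤ, z ^ p.1 * q ^ (p.1 ^ 2) * (w ^ p.2 * r ^ (p.2 ^ 2)) :=
  tsum_mul_tsum_of_summable_norm (summable_norm_zpow_mul_zpow_sq hq0 hq hz)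
    (summable_norm_zpow_mul_zpow_sq hr0 hr hw)

theorem thetaSeries_mul_thetaSeries_same (hq0 : q ≠ 0) (hq : ‖q‖ < 1) (hz : z ≠ 0) (hw : w ≠ 0) :
    thetaSeries z q * thetaSeries w q =
      thetaSeries (z * w) (q ^ 2) * thetaSeries (z / w) (q ^ 2)
      + z * q * (thetaSeries (z * w * q ^ 2) (q ^ 2) * thetaSeries (z / w * q ^ 2) (q ^ 2)) := by
  have hq2 : ‖q ^ 2‖ < 1 := norm_pow_lt_one hq two_ne_zero
  have hq20 := pow_ne_zero 2 hq0
  have hzw := mul_ne_zero hz hw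
  have hzw' := div_ne_zero hz hw
  rw [thetaSeries_mul_thetaSeries hq20 hq2 hq20 hq2 hzw hzw',
    thetaSeries_mul_thetaSeries hq20 hq2 hq20 hq2 (mul_ne_zero hzw hq20) (mul_ne_zero hzw' hq20),
    ← tsum_mul_left]
  refine (tsum_mul_tsum_eq_add_sub (summable_norm_zpow_mul_zpow_sq hq0 hq hz)
    (summable_norm_zpow_mul_zpow_sq hq0 hq hw)).trans ?_
  congr 1
  · refine tsum_congr fun p => ?_
    linear_combination z ^ (p.1 + p.2) * w ^ (p.1 - p.2) * zpow_add_sq_mul_zpow_sub_sq hq0 p.1 p.2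
      + (q ^ 2) ^ (p.1 ^ 2) * (q ^ 2) ^ (p.2 ^ 2) * zpow_add_mul_zpow_sub hz hw p.1 p.2
  · refine tsum_congr fun p => ?_
    rw [mul_zpow (z * w), mul_zpow (z / w), zpow_add_one₀ hz]
    linear_combination z ^ (p.1 + p.2) * z * w ^ (p.1 - p.2)
        * zpow_add_add_one_sq_mul_zpow_sub_sq hq0 p.1 p.2
      + z * q * ((q ^ 2) ^ p.1 * (q ^ 2) ^ (p.1 ^ 2) * ((q ^ 2) ^ p.2 * (q ^ 2) ^ (p.2 ^ 2)))
        * zpow_add_mul_zpow_sub hz hw p.1 p.2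

theorem thetaSeries_one_sq (hq0 : q ≠ 0) (hq : ‖q‖ < 1) :
    thetaSeries 1 q ^ 2 =
      thetaSeries 1 (q ^ 2) ^ 2 + q * thetaSeries (q ^ 2) (q ^ 2) ^ 2 := by
  simpa [sq] using
    thetaSeries_mul_thetaSeries_same hq0 hq (one_ne_zero (α := 𝕜)) (one_ne_zero (α := 𝕜))

theorem thetaSeries_neg_one_sq (hq0 : q ≠ 0) (hq : ‖q‖ < 1) :
    thetaSeries (-1) q ^ 2 =
      thetaSeries 1 (q ^ 2) ^ 2 - q * thetaSeries (q ^ 2) (q ^ 2) ^ 2 := by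
  have hneg : (-1 : 𝕜) ≠ 0 := neg_ne_zero.2 one_ne_zero
  simpa [sq, sub_eq_add_neg] using thetaSeries_mul_thetaSeries_same hq0 hq hneg hneg

theorem thetaSeries_self_sq (hq0 : q ≠ 0) (hq : ‖q‖ < 1) :
    thetaSeries q q ^ 2 = 2 * (thetaSeries 1 (q ^ 2) * thetaSeries (q ^ 2) (q ^ 2)) := by
  have hquasi : q * q * thetaSeries (q * q * q ^ 2) (q ^ 2) = thetaSeries 1 (q ^ 2) := by
    rw [show q * q = 1 * q ^ 2 by ring, show 1 * q ^ 2 * q ^ 2 = 1 * (q ^ 2) ^ 2 by ring]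
    exact mul_thetaSeries_mul_sq (pow_ne_zero 2 hq0) one_ne_zero
  have hadd := thetaSeries_mul_thetaSeries_same hq0 hq hq0 hq0
  rw [div_self hq0, one_mul, ← mul_assoc, hquasi] at hadd
  rw [sq, hadd]
  ring_nf

theorem jacobi_quartic (hq0 : q ≠ 0) (hq : ‖q‖ < 1) :
    thetaSeries 1 q ^ 4 = thetaSeries (-1) q ^ 4 + q * thetaSeries q q ^ 4 := by
  linear_combination
    (thetaSeries 1 q ^ 2 + thetaSeries 1 (q ^ 2) ^ 2 + q * thetaSeries (q ^ 2) (q ^ 2) ^ 2)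
      * thetaSeries_one_sq hq0 hq
    - (thetaSeries (-1) q ^ 2 + thetaSeries 1 (q ^ 2) ^ 2
      - q * thetaSeries (q ^ 2) (q ^ 2) ^ 2) * thetaSeries_neg_one_sq hq0 hq
    - q * (thetaSeries q q ^ 2 + 2 * (thetaSeries 1 (q ^ 2) * thetaSeries (q ^ 2) (q ^ 2)))
      * thetaSeries_self_sq hq0 hq

theorem thetaSeries_cubic_sub (hq0 : q ≠ 0) (hq : ‖q‖ < 1) :
    thetaSeries 1 q * thetaSeries 1 (q ^ 3) - thetaSeries (-1) q * thetaSeries (-1) (q ^ 3) =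
      2 * ∑' p : ℤ × ℤ, q ^ ((p.1 + p.2 + 1) ^ 2 + 3 * (p.1 - p.2) ^ 2) := by
  have hq3 : ‖q ^ 3‖ < 1 := norm_pow_lt_one hq three_ne_zero
  have hneg : (-1 : 𝕜) ≠ 0 := neg_ne_zero.2 one_ne_zero
  have heven (a b : ℤ) : (-1 : 𝕜) ^ (a + b) * (-1) ^ (a - b) = 1 := by
    rw [← zpow_add₀ hneg, Even.neg_one_zpow ⟨a, by ring⟩]
  have hodd (a b : ℤ) : (-1 : 𝕜) ^ (a + b + 1) * (-1) ^ (a - b) = -1 := by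
    rw [← zpow_add₀ hneg, Odd.neg_one_zpow ⟨a, by ring⟩]
  have hreorder (i j : ℤ) (y w : 𝕜) :
      (-1) ^ i * y * ((-1) ^ j * w) = (-1) ^ i * (-1) ^ j * (y * w) := mul_mul_mul_comm _ _ _ _
  have hone := tsum_mul_tsum_eq_add_sub (summable_norm_zpow_mul_zpow_sq hq0 hq one_ne_zero)
    (summable_norm_zpow_mul_zpow_sq (pow_ne_zero 3 hq0) hq3 one_ne_zero)
  have hneg_one := tsum_mul_tsum_eq_add_sub (summable_norm_zpow_mul_zpow_sq hq0 hq hneg)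
    (summable_norm_zpow_mul_zpow_sq (pow_ne_zero 3 hq0) hq3 hneg)
  simp only [hreorder, heven, hodd, one_zpow, one_mul, neg_one_mul, tsum_neg]
    at hone hneg_one
  simp only [thetaSeries, one_zpow, one_mul, zpow_add₀ hq0, ← Nat.cast_ofNat (R := ℤ) (n := 3),
    ← pow_zpow_eq]
  rw [hone, hneg_one]
  ring

theorem mul_thetaSeries_self_cubic (hq0 : q ≠ 0) (hq : ‖q‖ < 1) :
    q * (thetaSeries q q * thetaSeries (q ^ 3) (q ^ 3)) =
      2 * ∑' p : ℤ × ℤ, q ^ ((p.1 + p.2 + 1) ^ 2 + 3 * (p.1 - p.2) ^ 2) := by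
  have hq3 : ‖q ^ 3‖ < 1 := norm_pow_lt_one hq three_ne_zero
  have hq30 := pow_ne_zero 3 hq0
  let evenEquiv : ℤ × ℤ ≃ ℤ × ℤ :=
    { toFun := fun p => (p.1, p.1 - p.2)
      invFun := fun p => (p.1, p.1 - p.2)
      left_inv := fun p => by simp
      right_inv := fun p => by simp }
  let oddEquiv : ℤ × ℤ ≃ ℤ × ℤ :=
    { toFun := fun p => (p.2, p.2 - p.1 - 1)
      invFun := fun p => (p.1 - p.2 - 1, p.1)
      left_inv := fun p => Prod.ext (by dsimp only; ring) rfl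
      right_inv := fun p => Prod.ext rfl (by dsimp only; ring) }
  have hsplit := tsum_mul_tsum_eq_add_sub (summable_norm_zpow_mul_zpow_sq hq0 hq hq0)
    (summable_norm_zpow_mul_zpow_sq hq30 hq3 hq30)
  simp only [pow_zpow_eq, ← zpow_add₀ hq0] at hsplit
  simp only [thetaSeries, pow_zpow_eq, ← zpow_add₀ hq0]
  rw [hsplit, mul_add, two_mul, ← tsum_mul_left, ← tsum_mul_left]
  congr 1
  · refine (tsum_congr fun p => ?_).trans (evenEquiv.tsum_eq _)
    rw [← zpow_one_add₀ hq0]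
    congr 1
    simp only [evenEquiv, Equiv.coe_fn_mk]
    push_cast
    ring
  · refine (tsum_congr fun p => ?_).trans (oddEquiv.tsum_eq _)
    rw [← zpow_one_add₀ hq0]
    congr 1
    simp only [oddEquiv, Equiv.coe_fn_mk]
    push_cast
    ring

theorem legendre_cubic (hq0 : q ≠ 0) (hq : ‖q‖ < 1) :
    thetaSeries 1 q * thetaSeries 1 (q ^ 3) = thetaSeries (-1) q * thetaSeries (-1) (q ^ 3)
      + q * (thetaSeries q q * thetaSeries (q ^ 3) (q ^ 3)) := by
  linear_combination thetaSeries_cubic_sub hq0 hq - mul_thetaSeries_self_cubic hq0 hq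

theorem thetaSeries_one_eq (hq0 : q ≠ 0) (hq : ‖q‖ < 1) :
    thetaSeries 1 q = qPochhammerInf (q ^ 2) (q ^ 2) * qPochhammerInf (-q) (q ^ 2) ^ 2 := by
  rw [jacobi_triple_product hq0 hq one_ne_zero, inv_one, one_mul, sq (qPochhammerInf (-q) _)]

theorem thetaSeries_neg_one_eq (hq0 : q ≠ 0) (hq : ‖q‖ < 1) :
    thetaSeries (-1) q = qPochhammerInf (q ^ 2) (q ^ 2) * qPochhammerInf q (q ^ 2) ^ 2 := by
  rw [jacobi_triple_product hq0 hq (neg_ne_zero.2 one_ne_zero), inv_neg_one, neg_one_mul, neg_neg,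
    sq (qPochhammerInf q _)]

theorem thetaSeries_self_eq (hq0 : q ≠ 0) (hq : ‖q‖ < 1) :
    thetaSeries q q =
      2 * qPochhammerInf (q ^ 2) (q ^ 2) * qPochhammerInf (-q ^ 2) (q ^ 2) ^ 2 := by
  have hq2 : ‖q ^ 2‖ < 1 := norm_pow_lt_one hq two_ne_zero
  rw [jacobi_triple_product hq0 hq hq0, inv_mul_cancel₀ hq0,
    qPochhammerInf_eq_one_sub_mul (-1) hq2, ← sq, neg_one_mul]
  ring

theorem weber_octic (hq0 : q ≠ 0) (hq : ‖q‖ < 1) :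
    qPochhammerInf (-q) (q ^ 2) ^ 8 =
      qPochhammerInf q (q ^ 2) ^ 8 + 16 * q * qPochhammerInf (-q ^ 2) (q ^ 2) ^ 8 := by
  have hq2 : ‖q ^ 2‖ < 1 := norm_pow_lt_one hq two_ne_zero
  have h := jacobi_quartic hq0 hq
  rw [thetaSeries_one_eq hq0 hq, thetaSeries_neg_one_eq hq0 hq, thetaSeries_self_eq hq0 hq] at h
  apply mul_left_cancel₀ (pow_ne_zero 4 (qPochhammerInf_ne_zero hq2 hq2))
  linear_combination h

theorem weber_cubic (hq0 : q ≠ 0) (hq : ‖q‖ < 1) :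
    qPochhammerInf (-q) (q ^ 2) ^ 2 * qPochhammerInf (-q ^ 3) ((q ^ 3) ^ 2) ^ 2 =
      qPochhammerInf q (q ^ 2) ^ 2 * qPochhammerInf (q ^ 3) ((q ^ 3) ^ 2) ^ 2 +
      4 * q * (qPochhammerInf (-q ^ 2) (q ^ 2) ^ 2 *
        qPochhammerInf (-(q ^ 3) ^ 2) ((q ^ 3) ^ 2) ^ 2) := by
  have hq2 : ‖q ^ 2‖ < 1 := norm_pow_lt_one hq two_ne_zero
  have hq3 : ‖q ^ 3‖ < 1 := norm_pow_lt_one hq three_ne_zero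
  have hq6 : ‖(q ^ 3) ^ 2‖ < 1 := norm_pow_lt_one hq3 two_ne_zero
  have hq30 := pow_ne_zero 3 hq0
  have h := legendre_cubic hq0 hq
  rw [thetaSeries_one_eq hq0 hq, thetaSeries_neg_one_eq hq0 hq, thetaSeries_self_eq hq0 hq,
    thetaSeries_one_eq hq30 hq3, thetaSeries_neg_one_eq hq30 hq3,
    thetaSeries_self_eq hq30 hq3] at h
  apply mul_left_cancel₀
    (mul_ne_zero (qPochhammerInf_ne_zero hq2 hq2) (qPochhammerInf_ne_zero hq6 hq6))
  linear_combination h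

end Theta

/-! ### The modular equation of degree three -/

section ModularEquation

theorem mul_sub_sq_of_eq_add {R : Type*} [CommRing R] {x y z : R} (h : z = x + y) :
    z * (x - y) ^ 2 = z ^ 3 - 4 * (x * y * z) := by
  rw [h]
  ring

theorem sq_mul_two_mul_pow_four_sub {R : Type*} [CommRing R] {x y z : R} (h : z = x + y) :
    z ^ 2 * (2 * (x ^ 4 + y ^ 4) - z ^ 4) =
      z ^ 6 - 8 * (x * y * z) * z ^ 3 + 4 * (x * y * z) ^ 2 := by
  rw [h]
  ring

variable {R : Type*} [CommRing R] {q a b c d e f : R}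

theorem weber_discriminant (habe : a * b * e = 1) (ha : a ^ 8 = b ^ 8 + 16 * q * e ^ 8) :
    a ^ 8 * (b ^ 8 - 16 * q * e ^ 8) ^ 2 = a ^ 24 - 64 * q := by
  rw [mul_sub_sq_of_eq_add ha]
  linear_combination -64 * q * congrArg (· ^ 8) habe

theorem weber_cubic_product (habe : a * b * e = 1) (hcdf : c * d * f = 1) :
    b ^ 2 * d ^ 2 * (4 * q * (e ^ 2 * f ^ 2)) * (a ^ 2 * c ^ 2) = 4 * q :=
  calc
    _ = 4 * q * ((a * b * e) ^ 2 * (c * d * f) ^ 2) := by ring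
    _ = 4 * q := by rw [habe, hcdf]; ring

theorem weber_cubic_discriminant (habe : a * b * e = 1) (hcdf : c * d * f = 1)
    (ha : a ^ 8 = b ^ 8 + 16 * q * e ^ 8) (hc : c ^ 8 = d ^ 8 + 16 * q ^ 3 * f ^ 8)
    (hac : a ^ 2 * c ^ 2 = b ^ 2 * d ^ 2 + 4 * q * (e ^ 2 * f ^ 2)) :
    (a * c) ^ 4 * ((b ^ 8 - 16 * q * e ^ 8) * (d ^ 8 - 16 * q ^ 3 * f ^ 8)) =
      (a * c) ^ 12 - 32 * q * (a * c) ^ 6 + 64 * q ^ 2 := by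
  have hquartic := sq_mul_two_mul_pow_four_sub hac
  rw [weber_cubic_product habe hcdf] at hquartic
  linear_combination hquartic + (a * c) ^ 4 * (c ^ 8 * ha + (b ^ 8 + 16 * q * e ^ 8) * hc)

theorem weber_cubic_bound [LinearOrder R] [IsStrictOrderedRing R] (habe : a * b * e = 1)
    (hcdf : c * d * f = 1)
    (hac : a ^ 2 * c ^ 2 = b ^ 2 * d ^ 2 + 4 * q * (e ^ 2 * f ^ 2)) :
    16 * q ≤ (a * c) ^ 6 := by
  have hdisc := mul_sub_sq_of_eq_add hac
  rw [weber_cubic_product habe hcdf] at hdisc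
  have hnonneg : 0 ≤ a ^ 2 * c ^ 2 * (b ^ 2 * d ^ 2 - 4 * q * (e ^ 2 * f ^ 2)) ^ 2 := by positivity
  linear_combination hnonneg + hdisc

theorem weber_modular_equation_sq [IsDomain R] (h2 : (2 : R) ≠ 0) (hq : q ≠ 0)
    (habe : a * b * e = 1) (hcdf : c * d * f = 1)
    (ha : a ^ 8 = b ^ 8 + 16 * q * e ^ 8) (hc : c ^ 8 = d ^ 8 + 16 * q ^ 3 * f ^ 8)
    (hac : a ^ 2 * c ^ 2 = b ^ 2 * d ^ 2 + 4 * q * (e ^ 2 * f ^ 2)) :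
    (q * a ^ 12 + c ^ 12) ^ 2 = ((a * c) ^ 3 * ((a * c) ^ 6 - 8 * q)) ^ 2 := by
  have hA := weber_discriminant habe ha
  have hC := weber_discriminant hcdf hc
  have hAC := weber_cubic_discriminant habe hcdf ha hc hac
  have hdisc : ((a * c) ^ 12 - 32 * q * (a * c) ^ 6 + 64 * q ^ 2) ^ 2 =
      (a ^ 24 - 64 * q) * (c ^ 24 - 64 * q ^ 3) := by
    rw [← hA, ← hC, ← hAC]
    ring
  apply mul_left_cancel₀ (mul_ne_zero (pow_ne_zero 6 h2) hq)
  linear_combination hdisc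

end ModularEquation

section Chi

variable {q : ℝ}

theorem abs_cube_lt_one (hq : |q| < 1) : |q ^ 3| < 1 := by
  rw [abs_pow]
  exact pow_lt_one₀ (abs_nonneg q) hq three_ne_zero

theorem chi_eq_qPochhammerInf (q : ℝ) : chi q = qPochhammerInf (-q) (q ^ 2) :=
  tprod_congr fun m => by ring

theorem tendsto_prod_chi (hq : |q| < 1) :
    Tendsto (fun n => ∏ m ∈ range n, (1 + q ^ (2 * m + 1))) atTop (𝓝 (chi q)) := by
  have hq2 : ‖q ^ 2‖ < 1 := norm_pow_lt_one hq two_ne_zero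
  rw [chi_eq_qPochhammerInf]
  exact (tendsto_qPochhammer (-q) hq2).congr fun n => prod_congr rfl fun m _ => by ring

theorem one_add_pow_nonneg (hq : |q| < 1) (n : ℕ) : 0 ≤ 1 + q ^ n := by
  have h := abs_le.1 ((abs_pow q n).trans_le (pow_le_one₀ (abs_nonneg q) hq.le))
  linarith [h.1]

theorem chi_pos (hq : |q| < 1) : 0 < chi q := by
  have hq2 : ‖q ^ 2‖ < 1 := norm_pow_lt_one hq two_ne_zero
  have hne : chi q ≠ 0 := by
    rw [chi_eq_qPochhammerInf]
    exact qPochhammerInf_ne_zero (by rwa [norm_neg]) hq2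
  exact hne.symm.lt_of_le (ge_of_tendsto' (tendsto_prod_chi hq) fun _ =>
    prod_nonneg fun _ _ => one_add_pow_nonneg hq _)

theorem chi_le_chi {r : ℝ} (hq : |q| < 1) (hr : |r| < 1) (hqr : q ≤ r) : chi q ≤ chi r :=
  le_of_tendsto_of_tendsto' (tendsto_prod_chi hq) (tendsto_prod_chi hr) fun _ =>
    prod_le_prod (fun _ _ => one_add_pow_nonneg hq _) fun m _ =>
      add_le_add_right ((Odd.strictMono_pow ⟨m, rfl⟩).monotone hqr) 1

theorem chi_modular_equation_sq (hq0 : q ≠ 0) (hq : |q| < 1) :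
    (q * chi q ^ 12 + chi (q ^ 3) ^ 12) ^ 2 =
      ((chi q * chi (q ^ 3)) ^ 3 * ((chi q * chi (q ^ 3)) ^ 6 - 8 * q)) ^ 2 := by
  have hq3 : |q ^ 3| < 1 := abs_cube_lt_one hq
  rw [chi_eq_qPochhammerInf, chi_eq_qPochhammerInf]
  exact weber_modular_equation_sq two_ne_zero hq0 (weber_qPochhammerInf_mul hq)
    (weber_qPochhammerInf_mul hq3) (weber_octic hq0 hq) (weber_octic (pow_ne_zero 3 hq0) hq3)
    (weber_cubic hq0 hq)

theorem sixteen_mul_le_chi_mul_chi_pow (hq0 : q ≠ 0) (hq : |q| < 1) :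
    16 * q ≤ (chi q * chi (q ^ 3)) ^ 6 := by
  rw [chi_eq_qPochhammerInf, chi_eq_qPochhammerInf]
  exact weber_cubic_bound (weber_qPochhammerInf_mul hq)
    (weber_qPochhammerInf_mul (abs_cube_lt_one hq)) (weber_cubic hq0 hq)

theorem mul_chi_pow_add_chi_pow_nonneg (hq : |q| < 1) :
    0 ≤ q * chi q ^ 12 + chi (q ^ 3) ^ 12 := by
  have hq3 : |q ^ 3| < 1 := abs_cube_lt_one hq
  rcases le_or_gt 0 q with hq_nonneg | hq_neg
  · have := chi_pos hq
    positivity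
  · have hcube : q ≤ q ^ 3 := by nlinarith [(sq_lt_one_iff_abs_lt_one q).2 hq]
    have hle : chi q ≤ chi (q ^ 3) := chi_le_chi hq hq3 hcube
    have hpow : chi q ^ 12 ≤ chi (q ^ 3) ^ 12 := pow_le_pow_left₀ (chi_pos hq).le hle 12
    nlinarith [pow_pos (chi_pos hq) 12, neg_lt_of_abs_lt hq]

theorem chi_mul_chi_mul_sub_nonneg (hq0 : q ≠ 0) (hq : |q| < 1) :
    0 ≤ (chi q * chi (q ^ 3)) ^ 3 * ((chi q * chi (q ^ 3)) ^ 6 - 8 * q) := by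
  have ha := chi_pos hq
  have hc := chi_pos (abs_cube_lt_one hq)
  have hpow : 0 < (chi q * chi (q ^ 3)) ^ 6 := by positivity
  have hsub : 0 ≤ (chi q * chi (q ^ 3)) ^ 6 - 8 * q := by
    linarith [sixteen_mul_le_chi_mul_chi_pow hq0 hq]
  positivity

theorem chi_modular_equation (hq : |q| < 1) :
    q * chi q ^ 12 + chi (q ^ 3) ^ 12 =
      (chi q * chi (q ^ 3)) ^ 3 * ((chi q * chi (q ^ 3)) ^ 6 - 8 * q) := by
  rcases eq_or_ne q 0 with rfl | hq0
  · simp [chi]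
  · exact (pow_left_inj₀ (mul_chi_pow_add_chi_pow_nonneg hq) (chi_mul_chi_mul_sub_nonneg hq0 hq)
      two_ne_zero).1 (chi_modular_equation_sq hq0 hq)

theorem chi_pow_add_eight_mul_chi_pow_pos (hq : |q| < 1) :
    0 < chi (q ^ 3) ^ 9 + 8 * q * chi q ^ 3 := by
  have ha := chi_pos hq
  have hc := chi_pos (abs_cube_lt_one hq)
  rcases le_or_gt 0 q with hq_nonneg | hq_neg
  · positivity
  · have hrhs : 0 < chi q ^ 9 * (chi (q ^ 3) ^ 9 + -q * chi q ^ 3) := by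
      have := neg_pos.2 hq_neg
      positivity
    refine pos_of_mul_pos_right (a := chi (q ^ 3) ^ 3) ?_ (by positivity)
    linear_combination hrhs - chi_modular_equation hq

end Chi

theorem chi_ratio_cubed_general (q : ℝ) (hq : |q| < 1) (v : ℝ)
    (hv : v = -q * (chi q) ^ 3 / (chi (q ^ 3)) ^ 9) :
    (chi (q ^ 3) / (chi q) ^ 3) ^ 3 = (1 + v) / (1 - 8 * v) := by
  have ha : chi q ≠ 0 := (chi_pos hq).ne'
  have hc : chi (q ^ 3) ≠ 0 := (chi_pos (abs_cube_lt_one hq)).ne'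
  have hden := (chi_pow_add_eight_mul_chi_pow_pos hq).ne'
  have hadd : 1 + v = (chi (q ^ 3) ^ 9 - q * chi q ^ 3) / chi (q ^ 3) ^ 9 := by
    rw [hv]
    field_simp
    ring
  have hsub : 1 - 8 * v = (chi (q ^ 3) ^ 9 + 8 * q * chi q ^ 3) / chi (q ^ 3) ^ 9 := by
    rw [hv]
    field_simp
    ring
  rw [hadd, hsub, div_div_div_cancel_right₀ (pow_ne_zero 9 hc), div_pow,
    div_eq_div_iff (pow_ne_zero 3 (pow_ne_zero 3 ha)) hden]
  linear_combination chi_modular_equation hq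

/-- For `q ∈ (0,1)` and `v = -q χ³(q)/χ⁹(q³)`,
`(χ(q³)/χ³(q))³ = (1 + v)/(1 - 8v)`. -/
theorem chi_ratio_cubed (q : ℝ) (hq0 : 0 < q) (hq1 : q < 1) (v : ℝ)
    (hv : v = -q * (chi q) ^ 3 / (chi (q ^ 3)) ^ 9) :
    (chi (q ^ 3) / (chi q) ^ 3) ^ 3 = (1 + v) / (1 - 8 * v) :=
  chi_ratio_cubed_general q (abs_lt.2 ⟨by linarith, hq1⟩) v hv
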